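/- (Backward propagation bound, sparse version.) There exist absolute constants C, c > 0 such that if m ≥ C·n·L·log(n·L) and s is an integer with d/(C·log m) ≤ s ≤ m/(C·L·log m), then with probability at least 1 − e^{−c·s·log m} over the random matrices A, W_1,…,W_L, B: for all i ∈ [n] and all a ∈ {1,…,L+1}, |vᵀ B D_{i,L} W_L ⋯ D_{i,a} W_a u| ≤ C·√((s·log m)/d)·‖v‖·‖u‖ for every v ∈ ℝ^d and every u ∈ ℝ^m with at most s nonzero entries (for a = L+1 the product D_{i,L} W_L ⋯ D_{i,a} W_a is interpreted as the identity, i.e. the bound is for |vᵀ B u|). -/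

import Mathlib

/-!
For a fixed `u` the propagated vector is controlled through its `2 r`-th moment, `r ≍ s log m`.
Replacing a Gaussian row `w` by `-w` flips its gate `0 ≤ w ⬝ᵥ h` but not `(w ⬝ᵥ z) ^ 2`, so the gate
acts as an independent fair coin; the variance `2 / m` compensates it to first order and each layer
multiplies the moment by at most `exp (8 r ^ 2 / m)`, which is harmless over `L ≤ m / r` layers. The
output layer is a chi-square variable with `d ≲ r` degrees of freedom, and Markov's inequality gives
a failure probability `exp (-r)`. The reflection needs a nonzero forward vector, which is lost with
probability at most `2 ^ (L + 1 - m)`.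

A grid of `m ^ O(s)` vectors then suffices for all `s`-sparse `u`: it contains the coordinate
vectors, so the rounding error is controlled through its `ℓ¹` norm.
-/

open MeasureTheory ProbabilityTheory

noncomputable section

namespace DNNPaper

/-! ### Elementary linear algebra on plain function matrices -/

def mulVec {p q : ℕ} (M : Fin p → Fin q → ℝ) (v : Fin q → ℝ) : Fin p → ℝ :=
  fun i => ∑ j, M i j * v j

def mmul {p q r : ℕ} (M : Fin p → Fin q → ℝ) (N : Fin q → Fin r → ℝ) :
    Fin p → Fin r → ℝ :=
  fun i k => ∑ j, M i j * N j k

def transpose {p q : ℕ} (M : Fin p → Fin q → ℝ) : Fin q → Fin p → ℝ :=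
  fun j i => M i j

def dot {p : ℕ} (u v : Fin p → ℝ) : ℝ := ∑ i, u i * v i

def outer {p q : ℕ} (u : Fin p → ℝ) (v : Fin q → ℝ) : Fin p → Fin q → ℝ :=
  fun i j => u i * v j

def idMat (p : ℕ) : Fin p → Fin p → ℝ := fun i j => if i = j then 1 else 0

def diagMat {p : ℕ} (dg : Fin p → ℝ) : Fin p → Fin p → ℝ :=
  fun i j => if i = j then dg i else 0

def relu {p : ℕ} (v : Fin p → ℝ) : Fin p → ℝ := fun k => max (v k) 0

/-- diagonal entries of the ReLU sign matrix of a pre-activation vector -/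
def signOf {p : ℕ} (g : Fin p → ℝ) : Fin p → ℝ := fun k => if 0 ≤ g k then 1 else 0

/-- Euclidean norm -/
def l2 {p : ℕ} (v : Fin p → ℝ) : ℝ := Real.sqrt (∑ k, v k ^ 2)

/-- max-norm -/
def linf {p : ℕ} (v : Fin p → ℝ) : ℝ := ⨆ k, |v k|

/-- number of nonzero entries -/
def l0 {p : ℕ} (v : Fin p → ℝ) : ℕ := (Finset.univ.filter fun k => v k ≠ 0).card

/-- Frobenius norm -/
def frob {p q : ℕ} (M : Fin p → Fin q → ℝ) : ℝ := Real.sqrt (∑ i, ∑ j, M i j ^ 2)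

/-- spectral norm (ℓ₂ operator norm) -/
def spec {p q : ℕ} (M : Fin p → Fin q → ℝ) : ℝ :=
  sSup {r | ∃ v : Fin q → ℝ, l2 v ≤ 1 ∧ r = l2 (mulVec M v)}

/-- trace (Frobenius) inner product -/
def innerF {p q : ℕ} (M N : Fin p → Fin q → ℝ) : ℝ := ∑ i, ∑ j, M i j * N i j

/-- `‖W‖₂ = max_ℓ ‖W_ℓ‖₂` for a tuple of matrices -/
def tupleSpec {m L : ℕ} (W : Fin L → Fin m → Fin m → ℝ) : ℝ := ⨆ ℓ, spec (W ℓ)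

/-! ### The network -/

variable {𝔡 m d L : ℕ}

/-- `Wat W ℓ` is the weight matrix of layer `ℓ ∈ {1,…,L}` (identity outside this range). -/
def Wat (W : Fin L → Fin m → Fin m → ℝ) (ℓ : ℕ) : Fin m → Fin m → ℝ :=
  if h : 1 ≤ ℓ ∧ ℓ ≤ L then W ⟨ℓ - 1, by omega⟩ else idMat m

/-- the forward (post-activation) vectors `h_ℓ`, `ℓ = 0,1,…,L` -/
def hseq (A : Fin m → Fin 𝔡 → ℝ) (W : Fin L → Fin m → Fin m → ℝ) (x : Fin 𝔡 → ℝ) :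
    ℕ → Fin m → ℝ
  | 0 => relu (mulVec A x)
  | ℓ + 1 =>
      if ℓ + 1 ≤ L then relu (mulVec (Wat W (ℓ + 1)) (hseq A W x ℓ)) else hseq A W x ℓ

/-- the pre-activation vectors `g_ℓ`, `ℓ = 0,1,…,L` -/
def gseq (A : Fin m → Fin 𝔡 → ℝ) (W : Fin L → Fin m → Fin m → ℝ) (x : Fin 𝔡 → ℝ) :
    ℕ → Fin m → ℝ
  | 0 => mulVec A x
  | ℓ + 1 => mulVec (Wat W (ℓ + 1)) (hseq A W x ℓ)

/-- `chainProd W Dfun a b = (D_b W_b) (D_{b-1} W_{b-1}) ⋯ (D_a W_a)` where `D_ℓ` is the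
diagonal matrix with entries `Dfun ℓ`; it is the identity when `b < a`, and factors with
index outside `{1,…,L}` are skipped. -/
def chainProd (W : Fin L → Fin m → Fin m → ℝ) (Dfun : ℕ → Fin m → ℝ) (a : ℕ) :
    ℕ → Fin m → Fin m → ℝ
  | 0 => idMat m
  | b + 1 =>
      if a ≤ b + 1 ∧ b + 1 ≤ L then
        mmul (mmul (diagMat (Dfun (b + 1))) (Wat W (b + 1))) (chainProd W Dfun a b)
      else chainProd W Dfun a b

/-- `prodDW A W x a b = D_b W_b D_{b-1} W_{b-1} ⋯ D_a W_a` with the sign matrices of input `x` -/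
def prodDW (A : Fin m → Fin 𝔡 → ℝ) (W : Fin L → Fin m → Fin m → ℝ) (x : Fin 𝔡 → ℝ)
    (a b : ℕ) : Fin m → Fin m → ℝ :=
  chainProd W (fun ℓ => signOf (gseq A W x ℓ)) a b

/-- `Back_ℓ = B D_L W_L ⋯ D_ℓ W_ℓ` (equal to `B` for `ℓ = L+1`) -/
def backMat (B : Fin d → Fin m → ℝ) (A : Fin m → Fin 𝔡 → ℝ)
    (W : Fin L → Fin m → Fin m → ℝ) (x : Fin 𝔡 → ℝ) (ℓ : ℕ) : Fin d → Fin m → ℝ :=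
  mmul B (prodDW A W x ℓ L)

/-- formula gradient w.r.t. `W_ℓ` with an arbitrary (fake) loss vector `v`:
`D_ℓ (Back_{ℓ+1}ᵀ v) h_{ℓ-1}ᵀ` -/
def gradW (B : Fin d → Fin m → ℝ) (A : Fin m → Fin 𝔡 → ℝ)
    (W : Fin L → Fin m → Fin m → ℝ) (x : Fin 𝔡 → ℝ) (v : Fin d → ℝ) (ℓ : ℕ) :
    Fin m → Fin m → ℝ :=
  outer (mulVec (diagMat (signOf (gseq A W x ℓ)))
      (mulVec (transpose (backMat B A W x (ℓ + 1))) v))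
    (hseq A W x (ℓ - 1))

/-- loss vector `B h_L − y` -/
def lossVec (B : Fin d → Fin m → ℝ) (A : Fin m → Fin 𝔡 → ℝ)
    (W : Fin L → Fin m → Fin m → ℝ) (x : Fin 𝔡 → ℝ) (y : Fin d → ℝ) : Fin d → ℝ :=
  fun j => mulVec B (hseq A W x L) j - y j

/-- per-sample ℓ₂ regression loss `F_i` -/
def objFi (B : Fin d → Fin m → ℝ) (A : Fin m → Fin 𝔡 → ℝ)
    (W : Fin L → Fin m → Fin m → ℝ) (x : Fin 𝔡 → ℝ) (y : Fin d → ℝ) : ℝ :=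
  (1 / 2) * l2 (lossVec B A W x y) ^ 2

/-- total objective `F` -/
def objF {n : ℕ} (B : Fin d → Fin m → ℝ) (A : Fin m → Fin 𝔡 → ℝ)
    (W : Fin L → Fin m → Fin m → ℝ) (x : Fin n → Fin 𝔡 → ℝ)
    (y : Fin n → Fin d → ℝ) : ℝ :=
  ∑ i, objFi B A W (x i) (y i)

/-- formula gradient of the total objective w.r.t. `W_ℓ` -/
def gradF {n : ℕ} (B : Fin d → Fin m → ℝ) (A : Fin m → Fin 𝔡 → ℝ)
    (W : Fin L → Fin m → Fin m → ℝ) (x : Fin n → Fin 𝔡 → ℝ)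
    (y : Fin n → Fin d → ℝ) (ℓ : ℕ) : Fin m → Fin m → ℝ :=
  ∑ i, gradW B A W (x i) (lossVec B A W (x i) (y i)) ℓ

/-! ### Random initialization -/

/-- a `p × q` random matrix with i.i.d. `N(0, v)` entries -/
def gaussMat (p q : ℕ) (v : NNReal) : Measure (Fin p → Fin q → ℝ) :=
  Measure.pi fun _ => Measure.pi fun _ => gaussianReal 0 v

/-- joint law of `(A, W)` at random initialization -/
def initAW (𝔡 m L : ℕ) :
    Measure ((Fin m → Fin 𝔡 → ℝ) × (Fin L → Fin m → Fin m → ℝ)) :=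
  (gaussMat m 𝔡 (2 / m)).prod (Measure.pi fun _ : Fin L => gaussMat m m (2 / m))

/-- joint law of `(A, W, B)` at random initialization -/
def initMeasure (𝔡 m d L : ℕ) :
    Measure ((Fin m → Fin 𝔡 → ℝ) ×
      (Fin L → Fin m → Fin m → ℝ) × (Fin d → Fin m → ℝ)) :=
  (gaussMat m 𝔡 (2 / m)).prod
    ((Measure.pi fun _ : Fin L => gaussMat m m (2 / m)).prod (gaussMat d m (1 / d)))

/-! ### Reflection and Gaussian vectors -/

section Reflection

variable {E : Type*} [InvolutiveNeg E] [MeasurableSpace E] [MeasurableNeg E] {μ : Measure E}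
  [μ.IsNegInvariant]

lemma two_mul_lintegral_ite_nonneg {g : E → ℝ} (hg : Measurable g) (hodd : ∀ w, g (-w) = -g w)
    (hne : ∀ᵐ w ∂μ, g w ≠ 0) {F G : E → ENNReal} (hF : Measurable F) (hG : Measurable G)
    (hFeven : ∀ w, F (-w) = F w) (hGeven : ∀ w, G (-w) = G w) :
    2 * ∫⁻ w, (if 0 ≤ g w then F w else G w) ∂μ = ∫⁻ w, F w ∂μ + ∫⁻ w, G w ∂μ := by
  have hmeas : Measurable fun w => if 0 ≤ g w then F w else G w :=
    hF.ite (measurableSet_le measurable_const hg) hG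
  rw [two_mul]
  nth_rw 2 [← lintegral_neg_eq_self]
  rw [← lintegral_add_left hmeas, ← lintegral_add_left hF]
  refine lintegral_congr_ae ?_
  filter_upwards [hne] with w hw
  simp only [hodd, hFeven, hGeven, neg_nonneg]
  rcases hw.lt_or_gt with hneg | hpos
  · rw [if_neg hneg.not_ge, if_pos hneg.le, add_comm]
  · rw [if_pos hpos.le, if_neg hpos.not_ge]

lemma measure_setOf_nonneg_eq_half [IsProbabilityMeasure μ] {g : E → ℝ} (hg : Measurable g)
    (hodd : ∀ w, g (-w) = -g w) (hne : ∀ᵐ w ∂μ, g w ≠ 0) : μ {w | 0 ≤ g w} = 1 / 2 := by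
  have := two_mul_lintegral_ite_nonneg hg hodd hne (F := fun _ => 1) (G := fun _ => 0)
    measurable_const measurable_const (fun _ => rfl) (fun _ => rfl)
  rw [← lintegral_indicator_one (measurableSet_le measurable_const hg),
    ENNReal.eq_div_iff two_ne_zero ENNReal.ofNat_ne_top]
  simpa [Set.indicator_apply] using this

end Reflection

section GaussianVector

variable {ι : Type*} [Fintype ι] {v : NNReal} {h z : ι → ℝ}

lemma dotProduct_self_nonneg (z : ι → ℝ) : 0 ≤ z ⬝ᵥ z := by
  simpa using dotProduct_self_star_nonneg z

lemma dotProduct_self_pos (hz : z ≠ 0) : 0 < z ⬝ᵥ z := by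
  simpa using Matrix.dotProduct_self_star_pos_iff.2 hz

/-- The law of a vector with i.i.d. `N(0, v)` coordinates; the rows of a matrix distributed as
`gaussMat p q v` are independent with law `gaussVec (Fin q) v`. -/
abbrev gaussVec (ι : Type*) [Fintype ι] (v : NNReal) : Measure (ι → ℝ) :=
  Measure.pi fun _ => gaussianReal 0 v

instance : (gaussianReal 0 v).IsNegInvariant where
  neg_eq_self := gaussianReal_map_neg.trans (by rw [neg_zero])

@[fun_prop]
lemma measurable_dotProduct_const (z : ι → ℝ) : Measurable fun w : ι → ℝ => w ⬝ᵥ z := by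
  unfold dotProduct
  fun_prop

lemma map_dotProduct_gaussVec (v : NNReal) (z : ι → ℝ) :
    (gaussVec ι v).map (fun w => w ⬝ᵥ z) = gaussianReal 0 ((z ⬝ᵥ z).toNNReal * v) := by
  have := Measure.isProbabilityMeasure_map (μ := gaussVec ι v)
    (measurable_dotProduct_const z).aemeasurable
  refine Measure.ext_of_charFun (funext fun t => ?_)
  calc charFun ((gaussVec ι v).map fun w => w ⬝ᵥ z) t
      = ∫ w : ι → ℝ, ∏ j, Complex.exp ((t * z j : ℝ) * w j * Complex.I) ∂gaussVec ι v := by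
        rw [charFun_apply_real, integral_map (by fun_prop) (by fun_prop)]
        refine integral_congr_ae (.of_forall fun w => ?_)
        simp only [← Complex.exp_sum, dotProduct, Complex.ofReal_sum, Complex.ofReal_mul,
          Finset.mul_sum, Finset.sum_mul]
        congr 1
        exact Finset.sum_congr rfl fun j _ => by ring
    _ = ∏ j, charFun (gaussianReal 0 v) (t * z j) := by
        rw [integral_fintype_prod_eq_prod
          (f := fun j (y : ℝ) => Complex.exp ((t * z j : ℝ) * y * Complex.I))]
        simp only [charFun_apply_real]
    _ = charFun (gaussianReal 0 ((z ⬝ᵥ z).toNNReal * v)) t := by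
        have hexp : ∀ j, ((t * z j : ℝ) : ℂ) * (0 : ℝ) * Complex.I - v * (t * z j : ℝ) ^ 2 / 2
            = z j * z j * (-(v * t ^ 2) / 2) := fun j => by push_cast; ring
        have hsum : ((z ⬝ᵥ z : ℝ) : ℂ) = ∑ j, (z j : ℂ) * z j := by simp [dotProduct]
        simp only [charFun_gaussianReal, ← Complex.exp_sum, hexp, ← Finset.sum_mul, ← hsum,
          NNReal.coe_mul, Real.coe_toNNReal _ (dotProduct_self_nonneg z)]
        push_cast
        ring_nf

lemma lintegral_exp_sq_gaussianReal {σ : NNReal} {θ : ℝ} (h : 2 * θ * σ < 1) :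
    ∫⁻ y, ENNReal.ofReal (Real.exp (θ * y ^ 2)) ∂gaussianReal 0 σ
      = ENNReal.ofReal (√(1 - 2 * θ * σ))⁻¹ := by
  rcases eq_or_ne σ 0 with rfl | hσ
  · simp
  have hσ' : (0 : ℝ) < σ := by positivity
  have hb : 0 < (1 - 2 * θ * σ) / (2 * σ) := div_pos (by linarith) (by linarith)
  have hdensity : ∀ y, gaussianPDF 0 σ y * ENNReal.ofReal (Real.exp (θ * y ^ 2))
      = ENNReal.ofReal ((√(2 * Real.pi * σ))⁻¹
        * Real.exp (-((1 - 2 * θ * σ) / (2 * σ)) * y ^ 2)) := fun y => by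
    rw [gaussianPDF, gaussianPDFReal, ← ENNReal.ofReal_mul (by positivity), mul_assoc,
      ← Real.exp_add]
    congr 3
    field_simp
    ring
  rw [gaussianReal_of_var_ne_zero _ hσ, lintegral_withDensity_eq_lintegral_mul _ (by fun_prop)
    (by fun_prop)]
  simp only [Pi.mul_apply, hdensity]
  rw [← ofReal_integral_eq_lintegral_ofReal ((integrable_exp_neg_mul_sq hb).const_mul _)
    (.of_forall fun y => by positivity), integral_const_mul, integral_gaussian,
    ← Real.sqrt_inv, ← Real.sqrt_mul (by positivity), ← Real.sqrt_inv]
  congr 2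
  have := Real.pi_pos
  have : 1 - 2 * θ * σ ≠ 0 := by linarith
  field_simp

lemma lintegral_exp_sq_dotProduct {θ : ℝ} (h : 2 * θ * (z ⬝ᵥ z * v) < 1) :
    ∫⁻ w, ENNReal.ofReal (Real.exp (θ * (w ⬝ᵥ z) ^ 2)) ∂gaussVec ι v
      = ENNReal.ofReal (√(1 - 2 * θ * (z ⬝ᵥ z * v)))⁻¹ := by
  have hvar : (((z ⬝ᵥ z).toNNReal * v : NNReal) : ℝ) = z ⬝ᵥ z * v := by
    rw [NNReal.coe_mul, Real.coe_toNNReal _ (dotProduct_self_nonneg z)]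
  rw [← hvar] at h ⊢
  rw [← lintegral_exp_sq_gaussianReal h, ← map_dotProduct_gaussVec,
    lintegral_map (by fun_prop) (by fun_prop)]

lemma ae_dotProduct_ne_zero (hv : v ≠ 0) (hz : z ≠ 0) : ∀ᵐ w ∂gaussVec ι v, w ⬝ᵥ z ≠ 0 := by
  have := nullSingletonClass_gaussianReal (μ := 0)
    (mul_ne_zero (Real.toNNReal_pos.2 (dotProduct_self_pos hz)).ne' hv)
  have hmap : ∀ᵐ y ∂(gaussVec ι v).map fun w => w ⬝ᵥ z, y ≠ 0 := by
    rw [map_dotProduct_gaussVec]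
    exact compl_mem_ae_iff.2 (measure_singleton 0)
  exact ae_of_ae_map (p := fun y : ℝ => y ≠ 0) (by fun_prop) hmap

/-- Reflection `w ↦ -w` makes the sign gate of a Gaussian row an independent fair coin for every
function of `(w ⬝ᵥ z) ^ 2`. -/
lemma two_mul_lintegral_exp_gated_sq (hv : v ≠ 0) (hh : h ≠ 0) (z : ι → ℝ) (θ : ℝ) :
    2 * ∫⁻ w, ENNReal.ofReal (Real.exp (θ * if 0 ≤ w ⬝ᵥ h then (w ⬝ᵥ z) ^ 2 else 0)) ∂gaussVec ι v
      = 1 + ∫⁻ w, ENNReal.ofReal (Real.exp (θ * (w ⬝ᵥ z) ^ 2)) ∂gaussVec ι v := by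
  have := two_mul_lintegral_ite_nonneg (μ := gaussVec ι v) (measurable_dotProduct_const h)
    (fun w => neg_dotProduct w h) (ae_dotProduct_ne_zero hv hh)
    (F := fun w => ENNReal.ofReal (Real.exp (θ * (w ⬝ᵥ z) ^ 2))) (G := fun _ => 1)
    (by fun_prop) (by fun_prop) (fun w => by simp only [neg_dotProduct, neg_sq]) (fun _ => rfl)
  rw [lintegral_one, measure_univ, add_comm] at this
  rw [← this]
  congr 2 with w
  split_ifs <;> simp

lemma gaussVec_setOf_dotProduct_nonpos (hv : v ≠ 0) (hh : h ≠ 0) :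
    gaussVec ι v {w | w ⬝ᵥ h ≤ 0} = 1 / 2 := by
  have := measure_setOf_nonneg_eq_half (μ := gaussVec ι v) (measurable_dotProduct_const (-h))
    (fun w => neg_dotProduct w (-h)) (ae_dotProduct_ne_zero hv (neg_ne_zero.2 hh))
  simpa only [dotProduct_neg, neg_nonneg] using this

lemma inv_sqrt_one_sub_le {y : ℝ} (h0 : 0 ≤ y) (h1 : y ≤ 1 / 4) :
    (√(1 - y))⁻¹ ≤ 1 + y / 2 + y ^ 2 := by
  rw [← Real.sqrt_inv, Real.sqrt_le_left (by positivity), inv_le_iff_one_le_mul₀ (by linarith)]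
  have hexpand : (1 + y / 2 + y ^ 2) ^ 2 * (1 - y)
      = 1 + y ^ 2 * (5 / 4 - 5 / 4 * y - y ^ 3) := by ring
  have hcube : y ^ 3 ≤ (1 / 4) ^ 3 := pow_le_pow_left₀ h0 h1 3
  rw [hexpand]
  exact le_add_of_nonneg_right (mul_nonneg (sq_nonneg y) (by linarith))

lemma lintegral_exp_gated_sq_le (hv : v ≠ 0) (hh : h ≠ 0) {θ y : ℝ}
    (hy : y = 2 * θ * (z ⬝ᵥ z * v)) (hy0 : 0 ≤ y) (hy1 : y ≤ 1 / 4) :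
    ∫⁻ w, ENNReal.ofReal (Real.exp (θ * if 0 ≤ w ⬝ᵥ h then (w ⬝ᵥ z) ^ 2 else 0)) ∂gaussVec ι v
      ≤ ENNReal.ofReal (Real.exp (y / 4 + y ^ 2 / 2)) := by
  rw [← ENNReal.mul_le_mul_iff_right two_ne_zero ENNReal.ofNat_ne_top,
    two_mul_lintegral_exp_gated_sq hv hh, lintegral_exp_sq_dotProduct (by linarith), ← hy,
    ← ENNReal.ofReal_one, ← ENNReal.ofReal_add zero_le_one (by positivity),
    ← ENNReal.ofReal_ofNat 2, ← ENNReal.ofReal_mul zero_le_two]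
  refine ENNReal.ofReal_le_ofReal ?_
  linarith [inv_sqrt_one_sub_le hy0 hy1, Real.add_one_le_exp (y / 4 + y ^ 2 / 2)]

end GaussianVector

section Rows

variable {ι Ω : Type*} [Fintype ι] [MeasurableSpace Ω] {μ : Measure Ω} [IsProbabilityMeasure μ]

lemma lintegral_pi_prod_eq_pow {f : Ω → ENNReal} (hf : Measurable f) :
    ∫⁻ ω, ∏ k, f (ω k) ∂Measure.pi (fun _ : ι => μ) = (∫⁻ a, f a ∂μ) ^ Fintype.card ι := by
  have hind : iIndepFun (fun (k : ι) (ω : ι → Ω) => f (ω k)) (Measure.pi fun _ => μ) :=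
    iIndepFun_pi (X := fun _ => f) fun _ => hf.aemeasurable
  rw [lintegral_prod_eq_prod_lintegral_of_indepFun _ _ hind fun k => by fun_prop,
    Finset.prod_congr rfl fun k _ => (measurePreserving_eval (fun _ => μ) k).lintegral_comp hf,
    Finset.prod_const, Finset.card_univ]

/-- Optimised form of `x ≤ exp (x - 1)`, turning moments into exponential moments. -/
lemma rpow_le_mul_exp {y q p : ℝ} (hy : 0 ≤ y) (hq : 0 < q) (hp : 0 ≤ p) :
    y ^ p ≤ q ^ p * Real.exp (-p) * Real.exp (p / q * y) := by
  have hlin : y ≤ q * Real.exp (y / q - 1) := by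
    have := Real.add_one_le_exp (y / q - 1)
    rw [← div_le_iff₀' hq]
    linarith
  calc y ^ p ≤ (q * Real.exp (y / q - 1)) ^ p := Real.rpow_le_rpow hy hlin hp
    _ = q ^ p * Real.exp (-p) * Real.exp (p / q * y) := by
      rw [Real.mul_rpow hq.le (Real.exp_pos _).le, ← Real.exp_mul, mul_assoc, ← Real.exp_add]
      congr 2
      field_simp
      ring

lemma lintegral_rpow_sum_le {f : Ω → ℝ} (hf : Measurable f) (hf0 : ∀ a, 0 ≤ f a) {r q K : ℝ}
    (hr : 0 ≤ r) (hq : 0 < q) (hK : 0 ≤ K)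
    (hexp : ∫⁻ a, ENNReal.ofReal (Real.exp (r / q * f a)) ∂μ ≤ ENNReal.ofReal K) :
    ∫⁻ ω, ENNReal.ofReal ((∑ k, f (ω k)) ^ r) ∂Measure.pi (fun _ : ι => μ)
      ≤ ENNReal.ofReal (q ^ r * Real.exp (-r) * K ^ Fintype.card ι) := by
  have hc : 0 ≤ q ^ r * Real.exp (-r) := by positivity
  calc ∫⁻ ω, ENNReal.ofReal ((∑ k, f (ω k)) ^ r) ∂Measure.pi (fun _ : ι => μ)
      ≤ ∫⁻ ω, ENNReal.ofReal (q ^ r * Real.exp (-r))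
          * ∏ k, ENNReal.ofReal (Real.exp (r / q * f (ω k))) ∂Measure.pi (fun _ : ι => μ) := by
        refine lintegral_mono fun ω => ?_
        rw [← ENNReal.ofReal_prod_of_nonneg fun _ _ => (Real.exp_pos _).le,
          ← ENNReal.ofReal_mul hc, ← Real.exp_sum, ← Finset.mul_sum]
        exact ENNReal.ofReal_le_ofReal
          (rpow_le_mul_exp (Finset.sum_nonneg fun _ _ => hf0 _) hq hr)
    _ = ENNReal.ofReal (q ^ r * Real.exp (-r))
          * (∫⁻ a, ENNReal.ofReal (Real.exp (r / q * f a)) ∂μ) ^ Fintype.card ι := by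
        rw [lintegral_const_mul' _ _ ENNReal.ofReal_ne_top,
          ← lintegral_pi_prod_eq_pow (by fun_prop)]
    _ ≤ ENNReal.ofReal (q ^ r * Real.exp (-r)) * ENNReal.ofReal K ^ Fintype.card ι := by gcongr
    _ = _ := by rw [← ENNReal.ofReal_pow hK, ← ENNReal.ofReal_mul hc]

end Rows

/-! ### One layer -/

section Layer

variable {p q : ℕ} {v : NNReal} {h z : Fin q → ℝ} {r : ℝ}

lemma l2_eq_norm (y : Fin p → ℝ) : l2 y = ‖WithLp.toLp 2 y‖ := by
  simp [l2, EuclideanSpace.norm_eq]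

lemma l2_nonneg (y : Fin p → ℝ) : 0 ≤ l2 y := Real.sqrt_nonneg _

lemma l2_pos {y : Fin p → ℝ} (hy : y ≠ 0) : 0 < l2 y := by
  rw [l2_eq_norm]
  exact norm_pos_iff.2 ((WithLp.toLp_eq_zero 2).not.2 hy)

lemma l2_sq (y : Fin p → ℝ) : l2 y ^ 2 = y ⬝ᵥ y := by
  rw [l2, Real.sq_sqrt (Finset.sum_nonneg fun k _ => sq_nonneg (y k))]
  simp only [sq, dotProduct]

/-- The vector `y` with the coordinates at which `g` is negative set to zero. -/
def gate (g y : Fin p → ℝ) : Fin p → ℝ := fun k => signOf g k * y k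

lemma l2_sq_gate_mulVec (M : Fin p → Fin q → ℝ) (h z : Fin q → ℝ) :
    l2 (gate (mulVec M h) (mulVec M z)) ^ 2
      = ∑ k, if 0 ≤ M k ⬝ᵥ h then (M k ⬝ᵥ z) ^ 2 else 0 := by
  rw [l2, Real.sq_sqrt (Finset.sum_nonneg fun k _ => sq_nonneg _)]
  refine Finset.sum_congr rfl fun k _ => ?_
  change ((if 0 ≤ M k ⬝ᵥ h then (1 : ℝ) else 0) * (M k ⬝ᵥ z)) ^ 2 = _
  split_ifs <;> simp

lemma l2_sq_mulVec (M : Fin p → Fin q → ℝ) (z : Fin q → ℝ) :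
    l2 (mulVec M z) ^ 2 = ∑ k, (M k ⬝ᵥ z) ^ 2 := by
  rw [l2_sq]
  exact Finset.sum_congr rfl fun k _ => (sq _).symm

/-- The variance `2 / p` compensates the gate to first order: the factor is not exponential in `r`
but in `r ^ 2 / p`. -/
lemma lintegral_l2_gate_mulVec_rpow_le (hh : h ≠ 0) (z : Fin q → ℝ) (hr : 0 < r)
    (hrp : r ≤ p / 16) :
    ∫⁻ M, ENNReal.ofReal ((l2 (gate (mulVec M h) (mulVec M z)) ^ 2) ^ r) ∂gaussMat p q (2 / p)
      ≤ ENNReal.ofReal (Real.exp (8 * r ^ 2 / p)) * ENNReal.ofReal ((l2 z ^ 2) ^ r) := by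
  have hp : (0 : ℝ) < p := by linarith
  have hv : (2 / p : NNReal) ≠ 0 := (div_pos two_pos (by exact_mod_cast hp)).ne'
  simp only [l2_sq_gate_mulVec]
  rw [l2_sq z]
  rcases eq_or_ne z 0 with rfl | hz
  · simp [Real.zero_rpow hr.ne']
  have hz0 := dotProduct_self_pos hz
  have hrow := lintegral_exp_gated_sq_le hv hh (z := z) (θ := r / (z ⬝ᵥ z)) (y := 4 * (r / p))
    (by push_cast; field_simp; norm_num) (by positivity)
    (by have := (div_le_iff₀ hp).2 (hrp.trans_eq (div_eq_inv_mul _ _)); linarith)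
  refine (lintegral_rpow_sum_le
    (Measurable.ite (measurableSet_le measurable_const (by fun_prop)) (by fun_prop) (by fun_prop))
    (fun w => by positivity) hr.le hz0 (Real.exp_pos _).le hrow).trans_eq ?_
  rw [← ENNReal.ofReal_mul (Real.exp_pos _).le, Fintype.card_fin, ← Real.exp_nat_mul, mul_assoc,
    ← Real.exp_add, mul_comm]
  congr 3
  field_simp
  ring

/-- A Chernoff bound; the parameters are those of a chi-square variable with `p` degrees of
freedom and exponential moment `2 ^ p`. -/
lemma lintegral_l2_mulVec_rpow_le (hp : 0 < p) (z : Fin q → ℝ) (hr : 0 < r) :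
    ∫⁻ M, ENNReal.ofReal ((l2 (mulVec M z) ^ 2) ^ r) ∂gaussMat p q (1 / p)
      ≤ ENNReal.ofReal ((4 * r / p) ^ r * Real.exp (-r) * 2 ^ p)
        * ENNReal.ofReal ((l2 z ^ 2) ^ r) := by
  simp only [l2_sq_mulVec]
  rw [l2_sq z]
  rcases eq_or_ne z 0 with rfl | hz
  · simp [Real.zero_rpow hr.ne']
  have hz0 := dotProduct_self_pos hz
  have hθ : 2 * (r / (4 * r / p * (z ⬝ᵥ z))) * (z ⬝ᵥ z * ((1 / p : NNReal) : ℝ)) = 1 / 2 := by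
    push_cast
    field_simp
    norm_num
  have hrow : ∫⁻ w, ENNReal.ofReal (Real.exp (r / (4 * r / p * (z ⬝ᵥ z)) * (w ⬝ᵥ z) ^ 2))
      ∂gaussVec (Fin q) (1 / p) ≤ ENNReal.ofReal 2 := by
    rw [lintegral_exp_sq_dotProduct (by rw [hθ]; norm_num), hθ]
    refine ENNReal.ofReal_le_ofReal ?_
    rw [← Real.sqrt_inv, Real.sqrt_le_left zero_le_two]
    norm_num
  refine (lintegral_rpow_sum_le (by fun_prop) (fun w => by positivity) hr.le (by positivity)
    zero_le_two hrow).trans_eq ?_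
  rw [← ENNReal.ofReal_mul (by positivity), Fintype.card_fin,
    Real.mul_rpow (by positivity) hz0.le]
  congr 1
  ring

lemma relu_eq_zero_iff (y : Fin p → ℝ) : relu y = 0 ↔ ∀ k, y k ≤ 0 := by
  simp [relu, funext_iff]

lemma gaussMat_setOf_relu_mulVec_eq_zero (hv : v ≠ 0) (hh : h ≠ 0) :
    gaussMat p q v {M | relu (mulVec M h) = 0} = (1 / 2) ^ p := by
  have hpi : {M : Fin p → Fin q → ℝ | relu (mulVec M h) = 0}
      = Set.univ.pi fun _ => {w | w ⬝ᵥ h ≤ 0} := by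
    ext M
    simp only [Set.mem_ofPred_eq, relu_eq_zero_iff, Set.mem_univ_pi]
    rfl
  rw [hpi]
  exact (Measure.pi_pi _ _).trans (by simp [gaussVec_setOf_dotProduct_nonpos hv hh])

end Layer

/-! ### Independent random steps -/

section RandomSteps

variable {X S : Type*} [MeasurableSpace X]

lemma lintegral_foldl_le {μ : Measure X} [IsProbabilityMeasure μ] {step : Fin L → X → S → S}
    {φ : S → ENNReal} {K : ENNReal} (hK : K ≠ ⊤)
    (hstep : ∀ ℓ σ, ∫⁻ w, φ (step ℓ w σ) ∂μ ≤ K * φ σ) (σ : S) :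
    ∫⁻ w, φ (Fin.foldl L (fun σ ℓ => step ℓ (w ℓ) σ) σ) ∂Measure.pi (fun _ : Fin L => μ)
      ≤ K ^ L * φ σ := by
  induction L with
  | zero => simp
  | succ L ih =>
    let prior (w : Fin L → X) : S := Fin.foldl L (fun σ ℓ => step ℓ.castSucc (w ℓ) σ) σ
    have hmp := measurePreserving_piFinSuccAbove (fun _ : Fin (L + 1) => μ) (Fin.last L)
    calc ∫⁻ w, φ (Fin.foldl (L + 1) (fun σ ℓ => step ℓ (w ℓ) σ) σ) ∂Measure.pi (fun _ => μ)
        = ∫⁻ y, φ (step (Fin.last L) y.1 (prior y.2)) ∂μ.prod (Measure.pi fun _ => μ) := by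
          rw [← hmp.lintegral_comp_emb (MeasurableEquiv.measurableEmbedding _)]
          refine lintegral_congr fun w => ?_
          rw [Fin.foldl_succ_last]
          simp [prior, MeasurableEquiv.piFinSuccAbove, Fin.insertNthEquiv, Fin.init]
      _ = ∫⁻ y, φ (step (Fin.last L) y.2 (prior y.1)) ∂(Measure.pi fun _ => μ).prod μ :=
          (lintegral_prod_swap _).symm
      _ ≤ ∫⁻ w', ∫⁻ w, φ (step (Fin.last L) w (prior w')) ∂μ ∂Measure.pi fun _ => μ :=
          lintegral_prod_le _
      _ ≤ ∫⁻ w', K * φ (prior w') ∂Measure.pi fun _ => μ := lintegral_mono fun w' => hstep _ _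
      _ = K * ∫⁻ w', φ (prior w') ∂Measure.pi fun _ => μ := lintegral_const_mul' _ _ hK
      _ ≤ K * (K ^ L * φ σ) := by gcongr; exact ih fun ℓ => hstep ℓ.castSucc
      _ = K ^ (L + 1) * φ σ := by ring

lemma measurable_foldl [MeasurableSpace S] {step : Fin L → X → S → S}
    (hstep : ∀ ℓ, Measurable fun y : X × S => step ℓ y.1 y.2) :
    Measurable fun y : (Fin L → X) × S => Fin.foldl L (fun σ ℓ => step ℓ (y.1 ℓ) σ) y.2 := by
  induction L with
  | zero => simpa using measurable_snd
  | succ L ih =>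
    simp only [Fin.foldl_succ_last]
    have hinit := (ih fun ℓ => hstep ℓ.castSucc).comp
      (f := fun y : (Fin (L + 1) → X) × S => ((fun ℓ => y.1 ℓ.castSucc), y.2)) (by fun_prop)
    exact (hstep (Fin.last L)).comp (Measurable.prodMk (by fun_prop) hinit)

end RandomSteps

/-! ### The network as a random recursion -/

section Recursion

variable {p q r : ℕ}

lemma mulVec_diagMat_signOf (g y : Fin p → ℝ) : mulVec (diagMat (signOf g)) y = gate g y := by
  funext k
  simp [mulVec, diagMat, gate]

lemma mulVec_mmul (M : Fin p → Fin q → ℝ) (N : Fin q → Fin r → ℝ) (u : Fin r → ℝ) :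
    mulVec (mmul M N) u = mulVec M (mulVec N u) :=
  (Matrix.mulVec_mulVec u M N).symm

lemma mulVec_idMat (u : Fin p → ℝ) : mulVec (idMat p) u = u :=
  Matrix.one_mulVec u

lemma Wat_succ (W : Fin L → Fin m → Fin m → ℝ) {ℓ : ℕ} (h : ℓ < L) : Wat W (ℓ + 1) = W ⟨ℓ, h⟩ :=
  dif_pos ⟨by omega, by omega⟩

/-- One layer acting on the pair (forward vector, propagated vector); the propagated vector is
only touched from layer `a` on. The layer index `ℓ` starts at `0`, unlike that of `Wat`. -/
def layerStep (a ℓ : ℕ) (M : Fin m → Fin m → ℝ) (σ : (Fin m → ℝ) × (Fin m → ℝ)) :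
    (Fin m → ℝ) × (Fin m → ℝ) :=
  (relu (mulVec M σ.1), if a ≤ ℓ + 1 then gate (mulVec M σ.1) (mulVec M σ.2) else σ.2)

lemma mulVec_prodDW_succ (A : Fin m → Fin 𝔡 → ℝ) (W : Fin L → Fin m → Fin m → ℝ) (x : Fin 𝔡 → ℝ)
    (a : ℕ) (u : Fin m → ℝ) (ℓ : ℕ) :
    mulVec (prodDW A W x a (ℓ + 1)) u = if a ≤ ℓ + 1 ∧ ℓ + 1 ≤ L then
      gate (mulVec (Wat W (ℓ + 1)) (hseq A W x ℓ))
        (mulVec (Wat W (ℓ + 1)) (mulVec (prodDW A W x a ℓ) u))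
      else mulVec (prodDW A W x a ℓ) u := by
  rw [prodDW, chainProd]
  split_ifs
  · rw [mulVec_mmul, mulVec_mmul, mulVec_diagMat_signOf]
    rfl
  · rfl

lemma state_eq_foldl (A : Fin m → Fin 𝔡 → ℝ) (W : Fin L → Fin m → Fin m → ℝ) (x : Fin 𝔡 → ℝ)
    (a : ℕ) (u : Fin m → ℝ) {ℓ : ℕ} (hℓ : ℓ ≤ L) :
    (hseq A W x ℓ, mulVec (prodDW A W x a ℓ) u)
      = Fin.foldl ℓ (fun σ j => layerStep a j (W (j.castLE hℓ)) σ) (relu (mulVec A x), u) := by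
  induction ℓ with
  | zero => simp [hseq, prodDW, chainProd, mulVec_idMat]
  | succ ℓ ih =>
    have hcast : ∀ j : Fin ℓ, j.castSucc.castLE hℓ = j.castLE (Nat.le_of_succ_le hℓ) := fun _ => rfl
    simp only [Fin.foldl_succ_last, Fin.val_castSucc, Fin.val_last, hcast]
    rw [← ih, mulVec_prodDW_succ, hseq, if_pos hℓ, Wat_succ W hℓ]
    simp only [layerStep, hℓ, and_true]
    rfl

end Recursion

/-! ### Measurability of the network -/

/-- The weights `(A, W, B)` of a network. -/
abbrev Params (𝔡 m d L : ℕ) : Type :=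
  (Fin m → Fin 𝔡 → ℝ) × (Fin L → Fin m → Fin m → ℝ) × (Fin d → Fin m → ℝ)

section Measurability

variable {Y : Type*} [MeasurableSpace Y] {p q : ℕ}

@[fun_prop]
lemma measurable_mulVec {f : Y → Fin p → Fin q → ℝ} {g : Y → Fin q → ℝ} (hf : Measurable f)
    (hg : Measurable g) : Measurable fun y => mulVec (f y) (g y) := by
  unfold mulVec
  fun_prop

@[fun_prop]
lemma measurable_relu {g : Y → Fin p → ℝ} (hg : Measurable g) : Measurable fun y => relu (g y) := by
  unfold relu
  fun_prop

@[fun_prop]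
lemma measurable_gate {f g : Y → Fin p → ℝ} (hf : Measurable f) (hg : Measurable g) :
    Measurable fun y => gate (f y) (g y) := by
  refine measurable_pi_lambda _ fun k => Measurable.mul ?_ (by fun_prop)
  exact Measurable.ite (measurableSet_le measurable_const (by fun_prop)) measurable_const
    measurable_const

@[fun_prop]
lemma measurable_l2 {g : Y → Fin p → ℝ} (hg : Measurable g) : Measurable fun y => l2 (g y) := by
  unfold l2
  fun_prop

lemma measurable_layerStep (a ℓ : ℕ) :
    Measurable fun y : (Fin m → Fin m → ℝ) × (Fin m → ℝ) × (Fin m → ℝ) =>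
      layerStep a ℓ y.1 y.2 := by
  unfold layerStep
  split_ifs <;> fun_prop

lemma measurable_state (x : Fin 𝔡 → ℝ) (a : ℕ) (u : Fin m → ℝ) :
    Measurable fun y : Params 𝔡 m d L =>
      (hseq y.1 y.2.1 x L, mulVec (prodDW y.1 y.2.1 x a L) u) := by
  simp only [state_eq_foldl _ _ x a u le_rfl, Fin.castLE_rfl, id]
  exact (measurable_foldl (step := fun ℓ : Fin L => layerStep a ℓ)
    fun ℓ => measurable_layerStep a ℓ).comp
    (f := fun y : Params 𝔡 m d L => (y.2.1, relu (mulVec y.1 x), u)) (by fun_prop)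

lemma measurable_hseq (x : Fin 𝔡 → ℝ) :
    Measurable fun y : Params 𝔡 m d L => hseq y.1 y.2.1 x L :=
  (measurable_state x 0 0).fst

lemma measurable_mulVec_backMat (x : Fin 𝔡 → ℝ) (a : ℕ) (u : Fin m → ℝ) :
    Measurable fun y : Params 𝔡 m d L => mulVec (backMat y.2.2 y.1 y.2.1 x a) u := by
  simp only [backMat, mulVec_mmul]
  exact measurable_mulVec (by fun_prop) (measurable_state x a u).snd

end Measurability

/-! ### Moments and survival of the network -/

section Potentials

variable {p q : ℕ} {v : NNReal} {r : ℝ}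

instance : IsProbabilityMeasure (gaussMat p q v) := by
  unfold gaussMat
  infer_instance

instance : IsProbabilityMeasure (initMeasure 𝔡 m d L) := by
  unfold initMeasure
  infer_instance

/-- The `2 r`-th power of the norm of the propagated vector of a state, counted only as long as
the forward vector has not died: a row of Gaussian weights has a symmetric gate only then. -/
def livePot (r : ℝ) : (Fin m → ℝ) × (Fin p → ℝ) → ENNReal :=
  {σ | σ.1 ≠ 0}.indicator fun σ => ENNReal.ofReal ((l2 σ.2 ^ 2) ^ r)

lemma livePot_le (r : ℝ) (σ : (Fin m → ℝ) × (Fin p → ℝ)) :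
    livePot r σ ≤ ENNReal.ofReal ((l2 σ.2 ^ 2) ^ r) :=
  Set.indicator_le_self _ _ σ

lemma livePot_of_eq_zero {σ : (Fin m → ℝ) × (Fin p → ℝ)} (h : σ.1 = 0) : livePot r σ = 0 :=
  Set.indicator_of_notMem (fun hne : σ.1 ≠ 0 => hne h) _

lemma livePot_of_ne_zero {σ : (Fin m → ℝ) × (Fin p → ℝ)} (h : σ.1 ≠ 0) :
    livePot r σ = ENNReal.ofReal ((l2 σ.2 ^ 2) ^ r) :=
  Set.indicator_of_mem (s := {σ : (Fin m → ℝ) × (Fin p → ℝ) | σ.1 ≠ 0}) h _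

lemma measurable_livePot (r : ℝ) : Measurable (livePot (m := m) (p := p) r) :=
  Measurable.indicator (by fun_prop) (measurable_fst (measurableSet_singleton 0).compl)

lemma relu_mulVec_zero (M : Fin p → Fin q → ℝ) : relu (mulVec M 0) = 0 := by
  simp [relu_eq_zero_iff, mulVec]

lemma lintegral_livePot_layerStep_le (hr : 0 < r) (hrm : r ≤ m / 16) (a ℓ : ℕ)
    (σ : (Fin m → ℝ) × (Fin m → ℝ)) :
    ∫⁻ M, livePot r (layerStep a ℓ M σ) ∂gaussMat m m (2 / m)
      ≤ ENNReal.ofReal (Real.exp (8 * r ^ 2 / m)) * livePot r σ := by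
  have hK : 1 ≤ ENNReal.ofReal (Real.exp (8 * r ^ 2 / m)) := by
    simpa using (by positivity : (0 : ℝ) ≤ 8 * r ^ 2 / m)
  by_cases hσ : σ.1 = 0
  · have hdead : ∀ M, livePot r (layerStep a ℓ M σ) = 0 := fun M =>
      livePot_of_eq_zero (by rw [layerStep, hσ, relu_mulVec_zero])
    simp [hdead]
  rw [livePot_of_ne_zero hσ]
  refine (lintegral_mono fun M => livePot_le r _).trans ?_
  simp only [layerStep]
  split_ifs
  · exact lintegral_l2_gate_mulVec_rpow_le hσ σ.2 hr hrm
  · simpa using le_mul_of_one_le_left' hK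

lemma lintegral_livePot_mulVec_le (hd : 0 < d) (hr : 0 < r) (σ : (Fin m → ℝ) × (Fin m → ℝ)) :
    ∫⁻ B, livePot r (σ.1, mulVec B σ.2) ∂gaussMat d m (1 / d)
      ≤ ENNReal.ofReal ((4 * r / d) ^ r * Real.exp (-r) * 2 ^ d) * livePot r σ := by
  by_cases hσ : σ.1 = 0
  · simp [livePot_of_eq_zero, hσ]
  rw [livePot_of_ne_zero hσ]
  exact (lintegral_mono fun B => livePot_le r _).trans (lintegral_l2_mulVec_rpow_le hd σ.2 hr)

/-- The indicator of a dead forward vector, shifted by the probability `(1 / 2) ^ m` that a live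
one dies in the next layer: the shift makes the expected growth per layer multiplicative. -/
def deadPot (h : Fin m → ℝ) : ENNReal :=
  ({0} : Set (Fin m → ℝ)).indicator 1 h + (1 / 2) ^ m

lemma lintegral_deadPot_relu_mulVec {h : Fin q → ℝ} (hv : v ≠ 0) (hh : h ≠ 0) :
    ∫⁻ M, deadPot (relu (mulVec M h)) ∂gaussMat p q v = 2 * (1 / 2) ^ p := by
  have hmeas : MeasurableSet {M : Fin p → Fin q → ℝ | relu (mulVec M h) = 0} :=
    measurable_relu (measurable_mulVec measurable_id measurable_const) (measurableSet_singleton 0)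
  have hind : ∀ M : Fin p → Fin q → ℝ, ({0} : Set (Fin p → ℝ)).indicator 1 (relu (mulVec M h))
      = {M : Fin p → Fin q → ℝ | relu (mulVec M h) = 0}.indicator (fun _ => (1 : ENNReal)) M :=
    fun _ => rfl
  simp only [deadPot, hind]
  rw [lintegral_add_right _ measurable_const, lintegral_indicator_const hmeas,
    one_mul, gaussMat_setOf_relu_mulVec_eq_zero hv hh, lintegral_const, measure_univ, mul_one,
    two_mul]

lemma lintegral_deadPot_layerStep_le (hm : 0 < m) (a ℓ : ℕ) (σ : (Fin m → ℝ) × (Fin m → ℝ)) :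
    ∫⁻ M, deadPot (layerStep a ℓ M σ).1 ∂gaussMat m m (2 / m) ≤ 2 * deadPot σ.1 := by
  have hv : (2 / m : NNReal) ≠ 0 := by positivity
  simp only [layerStep]
  by_cases hσ : σ.1 = 0
  · simp only [hσ, relu_mulVec_zero, lintegral_const, measure_univ, mul_one]
    exact le_mul_of_one_le_left' one_le_two
  · rw [lintegral_deadPot_relu_mulVec hv hσ]
    exact mul_le_mul_right le_add_self 2

end Potentials

section InitMeasure

lemma lintegral_initMeasure_le (x : Fin 𝔡 → ℝ) (a : ℕ) (u : Fin m → ℝ)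
    {ψ : (Fin m → ℝ) × (Fin m → ℝ) → (Fin d → Fin m → ℝ) → ENNReal}
    {φ : (Fin m → ℝ) × (Fin m → ℝ) → ENNReal} {K : ENNReal} (hK : K ≠ ⊤)
    (hout : ∀ σ, ∫⁻ B, ψ σ B ∂gaussMat d m (1 / d) ≤ φ σ)
    (hstep : ∀ ℓ σ, ∫⁻ M, φ (layerStep a ℓ M σ) ∂gaussMat m m (2 / m) ≤ K * φ σ) :
    ∫⁻ y, ψ (hseq y.1 y.2.1 x L, mulVec (prodDW y.1 y.2.1 x a L) u) y.2.2 ∂initMeasure 𝔡 m d L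
      ≤ ∫⁻ A, K ^ L * φ (relu (mulVec A x), u) ∂gaussMat m 𝔡 (2 / m) := by
  unfold initMeasure
  refine (lintegral_prod_le _).trans (lintegral_mono fun A => ?_)
  calc ∫⁻ y, ψ (hseq A y.1 x L, mulVec (prodDW A y.1 x a L) u) y.2
        ∂(Measure.pi fun _ : Fin L => gaussMat m m (2 / m)).prod (gaussMat d m (1 / d))
      ≤ ∫⁻ W, ∫⁻ B, ψ (hseq A W x L, mulVec (prodDW A W x a L) u) B ∂gaussMat d m (1 / d)
          ∂Measure.pi fun _ => gaussMat m m (2 / m) := lintegral_prod_le _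
    _ ≤ ∫⁻ W, φ (hseq A W x L, mulVec (prodDW A W x a L) u)
          ∂Measure.pi fun _ => gaussMat m m (2 / m) := lintegral_mono fun W => hout _
    _ ≤ K ^ L * φ (relu (mulVec A x), u) := by
        simp only [state_eq_foldl _ _ x a u le_rfl, Fin.castLE_rfl, id]
        exact lintegral_foldl_le (step := fun ℓ : Fin L => layerStep a ℓ) hK
          (fun ℓ => hstep ℓ) _

lemma lintegral_livePot_backMat_le (hd : 0 < d) {r : ℝ} (hr : 0 < r) (hrm : r ≤ m / 16)
    (x : Fin 𝔡 → ℝ) (a : ℕ) (u : Fin m → ℝ) :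
    ∫⁻ y, livePot r (hseq y.1 y.2.1 x L, mulVec (backMat y.2.2 y.1 y.2.1 x a) u)
        ∂initMeasure 𝔡 m d L
      ≤ ENNReal.ofReal ((4 * r / d) ^ r * Real.exp (-r) * 2 ^ d
          * Real.exp (8 * r ^ 2 / m) ^ L * (l2 u ^ 2) ^ r) := by
  set c := ENNReal.ofReal ((4 * r / d) ^ r * Real.exp (-r) * 2 ^ d)
  set K := ENNReal.ofReal (Real.exp (8 * r ^ 2 / m))
  simp only [backMat, mulVec_mmul]
  calc _ ≤ ∫⁻ A, K ^ L * (c * livePot r (relu (mulVec A x), u)) ∂gaussMat m 𝔡 (2 / m) :=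
        lintegral_initMeasure_le x a u (ψ := fun σ B => livePot r (σ.1, mulVec B σ.2))
          (φ := fun σ => c * livePot r σ) ENNReal.ofReal_ne_top
          (lintegral_livePot_mulVec_le hd hr) fun ℓ σ => by
          rw [lintegral_const_mul' _ _ ENNReal.ofReal_ne_top, mul_left_comm]
          gcongr
          exact lintegral_livePot_layerStep_le hr hrm a ℓ σ
    _ ≤ ∫⁻ _, K ^ L * (c * ENNReal.ofReal ((l2 u ^ 2) ^ r)) ∂gaussMat m 𝔡 (2 / m) := by
        gcongr
        exact livePot_le r _
    _ = _ := by
        rw [lintegral_const, measure_univ, mul_one, mul_left_comm, ← mul_assoc,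
          ← ENNReal.ofReal_pow (by positivity), ← ENNReal.ofReal_mul (by positivity),
          ← ENNReal.ofReal_mul (by positivity)]

lemma initMeasure_setOf_lt_l2_backMat_le (hd : 0 < d) {r : ℝ} (hr : 0 < r) (hrm : r ≤ m / 16)
    (x : Fin 𝔡 → ℝ) (a : ℕ) (u : Fin m → ℝ) {T : ℝ} (hT : 0 < T) :
    initMeasure 𝔡 m d L {y | hseq y.1 y.2.1 x L ≠ 0 ∧
        T * l2 u < l2 (mulVec (backMat y.2.2 y.1 y.2.1 x a) u)}
      ≤ ENNReal.ofReal ((4 * r / (d * T ^ 2)) ^ r * Real.exp (8 * r ^ 2 * L / m - r) * 2 ^ d) := by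
  rcases eq_or_ne u 0 with rfl | hu
  · simp [mulVec, l2]
  have hu0 := l2_pos hu
  set f : Params 𝔡 m d L → ENNReal := fun y =>
    livePot r (hseq y.1 y.2.1 x L, mulVec (backMat y.2.2 y.1 y.2.1 x a) u)
  have hf : Measurable f := (measurable_livePot r).comp
    ((measurable_hseq x).prodMk (measurable_mulVec_backMat x a u))
  set t : ℝ := ((T * l2 u) ^ 2) ^ r
  have ht : 0 < t := by positivity
  have hsub : {y : Params 𝔡 m d L | hseq y.1 y.2.1 x L ≠ 0 ∧
      T * l2 u < l2 (mulVec (backMat y.2.2 y.1 y.2.1 x a) u)} ⊆ {y | ENNReal.ofReal t ≤ f y} := by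
    rintro y ⟨hlive, hlt⟩
    change _ ≤ livePot _ _
    rw [livePot_of_ne_zero hlive]
    exact ENNReal.ofReal_le_ofReal (Real.rpow_le_rpow (by positivity) (by gcongr) hr.le)
  refine (measure_mono hsub).trans ?_
  rw [← ENNReal.mul_le_mul_iff_right (by simpa using ht) ENNReal.ofReal_ne_top]
  refine (mul_meas_ge_le_lintegral hf (ENNReal.ofReal t)).trans
    ((lintegral_livePot_backMat_le hd hr hrm x a u).trans_eq ?_)
  rw [← ENNReal.ofReal_mul ht.le]
  congr 1
  have hsplit : t = (T ^ 2) ^ r * (l2 u ^ 2) ^ r := by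
    rw [← Real.mul_rpow (by positivity) (by positivity), ← mul_pow]
  have hdiv : (4 * r / (d * T ^ 2)) ^ r = (4 * r / d) ^ r / (T ^ 2) ^ r := by
    rw [← Real.div_rpow (by positivity) (by positivity), div_div]
  have hexp : Real.exp (8 * r ^ 2 * L / m - r)
      = Real.exp (-r) * Real.exp (8 * r ^ 2 / m) ^ L := by
    rw [← Real.exp_nat_mul, ← Real.exp_add]
    congr 1
    ring
  have hT' : (T ^ 2) ^ r ≠ 0 := by positivity
  rw [hsplit, hdiv, hexp]
  field_simp

lemma initMeasure_setOf_hseq_eq_zero_le (hm : 0 < m) {x : Fin 𝔡 → ℝ} (hx : x ≠ 0) :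
    initMeasure 𝔡 m d L {y | hseq y.1 y.2.1 x L = 0} ≤ 2 ^ (L + 1) * (1 / 2) ^ m := by
  have hv : (2 / m : NNReal) ≠ 0 := by positivity
  have hmeas : MeasurableSet {y : Params 𝔡 m d L | hseq y.1 y.2.1 x L = 0} :=
    measurable_hseq x (measurableSet_singleton 0)
  rw [← lintegral_indicator_one hmeas]
  calc _ ≤ ∫⁻ A, 2 ^ L * deadPot (relu (mulVec A x)) ∂gaussMat m 𝔡 (2 / m) :=
        lintegral_initMeasure_le x 0 0
          (ψ := fun σ _ => ({0} : Set (Fin m → ℝ)).indicator 1 σ.1)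
          (φ := fun σ => deadPot σ.1) ENNReal.ofNat_ne_top (fun σ => by simp [deadPot])
          (lintegral_deadPot_layerStep_le hm 0)
    _ = 2 ^ (L + 1) * (1 / 2) ^ m := by
        rw [lintegral_const_mul' _ _ (by simp), lintegral_deadPot_relu_mulVec hv hx]
        ring

end InitMeasure

/-! ### A grid net of sparse vectors -/

section Grid

variable {s p q : ℕ}

/-- The grid vector encoded by `s` pairs (position, level), the level `c` contributing
`(c - m) / m` to its position. -/
def gridVec (f : Fin s → Fin m × Fin (2 * m + 1)) : Fin m → ℝ :=
  ∑ j, Pi.single (f j).1 (((f j).2 - m : ℝ) / m)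

lemma exists_gridVec_eq (hsm : s ≤ m) {c : Fin m → ℤ} (hc : ∀ k, |c k| ≤ m)
    (hsupp : (Finset.univ.filter fun k => c k ≠ 0).card ≤ s) :
    ∃ f : Fin s → Fin m × Fin (2 * m + 1), gridVec f = fun k => (c k : ℝ) / m := by
  obtain ⟨S, hS, hcard⟩ := Finset.exists_superset_card_eq hsupp (by simpa using hsm)
  have hlevel : ∀ k, (c k + m).toNat < 2 * m + 1 := fun k => by
    have := abs_le.1 (hc k)
    omega
  have hcast : ∀ k, (((c k + m).toNat : ℝ) - m) / m = c k / m := fun k => by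
    have : (((c k + m).toNat : ℤ) : ℝ) = c k + m := by
      rw [Int.toNat_of_nonneg (by have := abs_le.1 (hc k); omega)]
      push_cast
      rfl
    rw [← Int.cast_natCast, this, add_sub_cancel_right]
  let pos := S.orderEmbOfFin hcard
  refine ⟨fun j => (pos j, ⟨_, hlevel (pos j)⟩), ?_⟩
  calc gridVec (fun j => (pos j, ⟨_, hlevel (pos j)⟩))
      = ∑ j, Pi.single (pos j) ((c (pos j) : ℝ) / m) := by simp only [gridVec, hcast]
    _ = ∑ k ∈ S, Pi.single k ((c k : ℝ) / m) := by
        rw [← S.map_orderEmbOfFin_univ hcard, Finset.sum_map]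
        rfl
    _ = ∑ k, Pi.single k ((c k : ℝ) / m) := by
        refine Finset.sum_subset S.subset_univ fun k _ hk => ?_
        have : c k = 0 := by_contra fun hne => hk (hS (by simpa using hne))
        simp [this]
    _ = fun k => (c k : ℝ) / m := Finset.univ_sum_single _

lemma exists_gridVec_eq_single (hs : 1 ≤ s) (hsm : s ≤ m) (k : Fin m) :
    ∃ f : Fin s → Fin m × Fin (2 * m + 1), gridVec f = Pi.single k 1 := by
  have hm : (m : ℝ) ≠ 0 := by exact_mod_cast k.pos.ne'
  obtain ⟨f, hf⟩ := exists_gridVec_eq hsm (c := Pi.single k (m : ℤ))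
    (fun j => by rcases eq_or_ne j k with rfl | hj <;> simp [*])
    ((Finset.card_le_card (t := {k}) fun j hj => by
      simp only [Finset.mem_filter, Finset.mem_univ, true_and] at hj
      exact Finset.mem_singleton.2 (not_imp_comm.1 (Pi.single_eq_of_ne · _) hj)).trans hs)
  refine ⟨f, hf.trans (funext fun j => ?_)⟩
  rcases eq_or_ne j k with rfl | hj <;> simp [*]

lemma exists_sum_abs_sub_gridVec_le (hsm : s ≤ m) {u : Fin m → ℝ} (hu : l0 u ≤ s)
    (hu1 : ∀ k, |u k| ≤ 1) :
    ∃ f : Fin s → Fin m × Fin (2 * m + 1), ∑ k, |u k - gridVec f k| ≤ 1 / 2 := by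
  obtain ⟨f, hf⟩ := exists_gridVec_eq hsm (c := fun k => round (u k * m))
    (fun k => by
      have hround := abs_sub_round (u k * m)
      have hmul : |u k * m| ≤ m := by
        rw [abs_mul, Nat.abs_cast]
        exact mul_le_of_le_one_left m.cast_nonneg (hu1 k)
      have hlt : ((|round (u k * m)| : ℤ) : ℝ) < ((m + 1 : ℤ) : ℝ) := by
        push_cast
        have := abs_sub_abs_le_abs_sub (round (u k * m) : ℝ) (u k * m)
        rw [abs_sub_comm] at this
        linarith
      exact Int.lt_add_one_iff.1 (Int.cast_lt.1 hlt))
    ((Finset.card_le_card (Finset.monotone_filter_right _ fun k _ hk hzero =>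
      hk (by simp [hzero]))).trans hu)
  refine ⟨f, ?_⟩
  have herr : ∀ k, |u k - gridVec f k| ≤ if u k ≠ 0 then 1 / (2 * m : ℝ) else 0 := fun k => by
    have hm : (0 : ℝ) < m := by exact_mod_cast k.pos
    rw [hf]
    split_ifs with hk
    · rw [show u k - round (u k * m) / m = (u k * m - round (u k * m)) / m by field_simp,
        abs_div, Nat.abs_cast, ← div_div]
      gcongr
      exact abs_sub_round _
    · simp [not_not.1 hk]
  calc ∑ k, |u k - gridVec f k| ≤ ∑ k, if u k ≠ 0 then 1 / (2 * m : ℝ) else 0 :=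
        Finset.sum_le_sum fun k _ => herr k
    _ = l0 u * (1 / (2 * m)) := by
        rw [← Finset.sum_filter, Finset.sum_const, nsmul_eq_mul]
        rfl
    _ ≤ m * (1 / (2 * m)) := by
        gcongr
        exact hu.trans hsm
    _ ≤ 1 / 2 := by
        rw [mul_one_div, mul_comm 2, ← div_div]
        gcongr
        exact div_self_le_one _

/-- The Euclidean norm `l2` as a seminorm on plain functions. -/
def l2Seminorm (p : ℕ) : Seminorm ℝ (Fin p → ℝ) :=
  (normSeminorm ℝ (EuclideanSpace ℝ (Fin p))).comp
    (WithLp.linearEquiv 2 ℝ (Fin p → ℝ)).symm.toLinearMap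

lemma l2Seminorm_apply (u : Fin p → ℝ) : l2Seminorm p u = l2 u := (l2_eq_norm u).symm

lemma seminorm_le_sum_abs_mul (N : Seminorm ℝ (Fin m → ℝ)) (e : Fin m → ℝ) :
    N e ≤ ∑ k, |e k| * N (Pi.single k 1) := by
  calc N e = N (∑ k, e k • Pi.single k 1) := by
        congr 1
        ext j
        simp [Pi.single_apply]
    _ ≤ ∑ k, N (e k • Pi.single k 1) :=
        Finset.le_sum_of_subadditive N (map_zero N).le (map_add_le_add N) _ _
    _ = ∑ k, |e k| * N (Pi.single k 1) := by simp only [map_smul_eq_mul, Real.norm_eq_abs]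

lemma abs_apply_le_l2 (u : Fin m → ℝ) (k : Fin m) : |u k| ≤ l2 u := by
  rw [l2_eq_norm]
  exact PiLp.norm_apply_le (WithLp.toLp 2 u) k

lemma l2_single (k : Fin m) : l2 (Pi.single k 1 : Fin m → ℝ) = 1 := by
  simp [l2_eq_norm]

lemma seminorm_le_of_gridVec_of_l2_eq_one (hs : 1 ≤ s) (hsm : s ≤ m)
    {N : Seminorm ℝ (Fin m → ℝ)} {T : ℝ}
    (hN : ∀ f : Fin s → Fin m × Fin (2 * m + 1), N (gridVec f) ≤ T * l2 (gridVec f))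
    {u : Fin m → ℝ} (hu : l0 u ≤ s) (hu1 : l2 u = 1) : N u ≤ 2 * T := by
  have hsingle : ∀ k, N (Pi.single k 1) ≤ T := fun k => by
    obtain ⟨f, hf⟩ := exists_gridVec_eq_single hs hsm k
    simpa [hf, l2_single] using hN f
  have hT : 0 ≤ T := (apply_nonneg N _).trans (hsingle ⟨0, by omega⟩)
  obtain ⟨f, hf⟩ := exists_sum_abs_sub_gridVec_le hsm hu fun k => hu1 ▸ abs_apply_le_l2 u k
  have hl1 : ∑ k, |(u - gridVec f) k| ≤ 1 / 2 := hf
  have herrN : N (u - gridVec f) ≤ 1 / 2 * T :=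
    calc N (u - gridVec f) ≤ ∑ k, |(u - gridVec f) k| * T :=
          (seminorm_le_sum_abs_mul N _).trans (by gcongr with k; exact hsingle k)
      _ ≤ 1 / 2 * T := by rw [← Finset.sum_mul]; gcongr
  have herr2 : l2 (u - gridVec f) ≤ 1 / 2 := by
    have := seminorm_le_sum_abs_mul (l2Seminorm m) (u - gridVec f)
    simp only [l2Seminorm_apply, l2_single, mul_one] at this
    exact this.trans hl1
  have hgrid : l2 (gridVec f) ≤ 1 + 1 / 2 := by
    have := map_sub_le_add (l2Seminorm m) u (u - gridVec f)
    rw [sub_sub_cancel, l2Seminorm_apply, l2Seminorm_apply, l2Seminorm_apply, hu1] at this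
    linarith
  calc N u = N (gridVec f + (u - gridVec f)) := by rw [add_sub_cancel]
    _ ≤ N (gridVec f) + N (u - gridVec f) := map_add_le_add N _ _
    _ ≤ T * (1 + 1 / 2) + 1 / 2 * T := add_le_add ((hN f).trans (by gcongr)) herrN
    _ = 2 * T := by ring

lemma seminorm_le_of_gridVec (hs : 1 ≤ s) (hsm : s ≤ m) {N : Seminorm ℝ (Fin m → ℝ)} {T : ℝ}
    (hN : ∀ f : Fin s → Fin m × Fin (2 * m + 1), N (gridVec f) ≤ T * l2 (gridVec f))
    {u : Fin m → ℝ} (hu : l0 u ≤ s) : N u ≤ 2 * T * l2 u := by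
  rcases eq_or_ne u 0 with rfl | hu0
  · simp [l2]
  have hpos := l2_pos hu0
  have hl0 : l0 ((l2 u)⁻¹ • u) = l0 u := by simp [l0, hpos.ne']
  have hl2 : l2 ((l2 u)⁻¹ • u) = 1 := by
    rw [← l2Seminorm_apply, map_smul_eq_mul, l2Seminorm_apply, Real.norm_of_nonneg (by positivity),
      inv_mul_cancel₀ hpos.ne']
  have := seminorm_le_of_gridVec_of_l2_eq_one hs hsm hN (hl0.trans_le hu) hl2
  rwa [map_smul_eq_mul, Real.norm_of_nonneg (by positivity), inv_mul_le_iff₀ hpos,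
    mul_comm] at this

lemma l2_mulVec_le_of_gridVec (hs : 1 ≤ s) (hsm : s ≤ m) {M : Fin p → Fin m → ℝ} {T : ℝ}
    (hM : ∀ f : Fin s → Fin m × Fin (2 * m + 1), l2 (mulVec M (gridVec f)) ≤ T * l2 (gridVec f))
    {u : Fin m → ℝ} (hu : l0 u ≤ s) : l2 (mulVec M u) ≤ 2 * T * l2 u := by
  have hN : ∀ w, (l2Seminorm p).comp (Matrix.mulVecLin M) w = l2 (mulVec M w) := fun w =>
    l2Seminorm_apply _
  simp only [← hN] at hM ⊢
  exact seminorm_le_of_gridVec hs hsm hM hu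

lemma abs_dot_le (v w : Fin p → ℝ) : |dot v w| ≤ l2 v * l2 w := by
  unfold dot l2
  rw [← Real.sqrt_mul (Finset.sum_nonneg fun _ _ => sq_nonneg _)]
  exact Real.abs_le_sqrt (Finset.sum_mul_sq_le_sq_mul_sq _ _ _)

end Grid

/-! ### The union bound -/

section UnionBound

variable {n s : ℕ} {Λ : ℝ}

/-- The event that every matrix `backMat B A W (x i) a`, as a bilinear form on arbitrary `v` and
`s`-sparse `u`, is bounded by `K`. -/
def sparseBackEvent (d L : ℕ) (x : Fin n → Fin 𝔡 → ℝ) (s : ℕ) (K : ℝ) : Set (Params 𝔡 m d L) :=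
  {z | ∀ (i : Fin n) (a : ℕ), 1 ≤ a → a ≤ L + 1 → ∀ (v : Fin d → ℝ) (u : Fin m → ℝ), l0 u ≤ s →
    |dot v (mulVec (backMat z.2.2 z.1 z.2.1 (x i) a) u)| ≤ K * l2 v * l2 u}

lemma initMeasure_compl_sparseBackEvent_le (hs : 1 ≤ s) (hsm : s ≤ m) {x : Fin n → Fin 𝔡 → ℝ}
    {T : ℝ} {δ : ENNReal} (hdead : ∀ i, initMeasure 𝔡 m d L {y | hseq y.1 y.2.1 (x i) L = 0} ≤ δ)
    (htail : ∀ i a u, initMeasure 𝔡 m d L {y | hseq y.1 y.2.1 (x i) L ≠ 0 ∧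
        T * l2 u < l2 (mulVec (backMat y.2.2 y.1 y.2.1 (x i) a) u)} ≤ δ) :
    initMeasure 𝔡 m d L (sparseBackEvent d L x s (2 * T))ᶜ
      ≤ (n * (1 + (L + 2) * (m * (2 * m + 1)) ^ s) : ℕ) * δ := by
  let D (i : Fin n) : Set (Params 𝔡 m d L) := {y | hseq y.1 y.2.1 (x i) L = 0}
  let E (j : Fin n × Fin (L + 2) × (Fin s → Fin m × Fin (2 * m + 1))) : Set (Params 𝔡 m d L) :=
    {y | hseq y.1 y.2.1 (x j.1) L ≠ 0 ∧ T * l2 (gridVec j.2.2)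
      < l2 (mulVec (backMat y.2.2 y.1 y.2.1 (x j.1) j.2.1) (gridVec j.2.2))}
  have hcover : (sparseBackEvent d L x s (2 * T))ᶜ ⊆ (⋃ i, D i) ∪ ⋃ j, E j := by
    intro y hy
    contrapose! hy
    rw [Set.notMem_compl_iff]
    intro i a _ ha v u hu
    have hlive : hseq y.1 y.2.1 (x i) L ≠ 0 := fun hzero =>
      hy (Or.inl (Set.mem_iUnion.2 ⟨i, hzero⟩))
    have hback := l2_mulVec_le_of_gridVec hs hsm (M := backMat y.2.2 y.1 y.2.1 (x i) a) (T := T)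
      (fun f => not_lt.1 fun hlt =>
        hy (Or.inr (Set.mem_iUnion.2 ⟨(i, ⟨a, by omega⟩, f), hlive, hlt⟩))) hu
    calc |dot v (mulVec (backMat y.2.2 y.1 y.2.1 (x i) a) u)|
        ≤ l2 v * l2 (mulVec (backMat y.2.2 y.1 y.2.1 (x i) a) u) := abs_dot_le _ _
      _ ≤ l2 v * (2 * T * l2 u) := mul_le_mul_of_nonneg_left hback (l2_nonneg v)
      _ = 2 * T * l2 v * l2 u := by ring
  have hD : initMeasure 𝔡 m d L (⋃ i, D i) ≤ n * δ :=
    (measure_iUnion_fintype_le _ _).trans ((Finset.sum_le_sum fun i _ => hdead i).trans (by simp))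
  have hE : initMeasure 𝔡 m d L (⋃ j, E j) ≤ (n * ((L + 2) * (m * (2 * m + 1)) ^ s) : ℕ) * δ :=
    (measure_iUnion_fintype_le _ _).trans
      ((Finset.sum_le_sum fun j _ => htail j.1 j.2.1 (gridVec j.2.2)).trans (by simp))
  calc _ ≤ n * δ + (n * ((L + 2) * (m * (2 * m + 1)) ^ s) : ℕ) * δ :=
        (measure_mono hcover).trans ((measure_union_le _ _).trans (add_le_add hD hE))
    _ = _ := by push_cast; ring

lemma union_count_le (hs : 1 ≤ s) (hnm : n ≤ m) (hLm : L + 3 ≤ m) :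
    n * (1 + (L + 2) * (m * (2 * m + 1)) ^ s) ≤ m ^ (5 * s) := by
  have hgrid : (m * (2 * m + 1)) ^ s ≤ m ^ (3 * s) := by
    rw [pow_mul]
    gcongr
    calc m * (2 * m + 1) ≤ m * (m * m) := by gcongr; nlinarith
      _ = m ^ 3 := by ring
  calc n * (1 + (L + 2) * (m * (2 * m + 1)) ^ s)
      ≤ m * (m ^ (3 * s) + (L + 2) * m ^ (3 * s)) := by
        gcongr
        exact Nat.one_le_pow _ _ (by omega)
    _ = m * (L + 3) * m ^ (3 * s) := by ring
    _ ≤ m * m * m ^ (3 * s) := by gcongr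
    _ = m ^ (2 + 3 * s) := by ring
    _ ≤ m ^ (5 * s) := Nat.pow_le_pow_right (by omega) (by omega)

lemma ninetySix_le_exp_seventeen : 96 ≤ Real.exp 17 := by
  have := Real.quadratic_le_exp_of_nonneg (x := 17) (by norm_num)
  linarith

/-- With `r` and `T` as chosen in the proof, `4 r / (d T ^ 2) = exp (-17)`, whose `r`-th power beats
`2 ^ d ≤ exp (16 r)`. -/
lemma initMeasure_setOf_lt_l2_backMat_le_exp (hd : 0 < d) (hL : 0 < L) (hΛ : 0 < Λ)
    (hdΛ : d ≤ Real.exp 17 * Λ) (hΛm : Real.exp 17 * Λ * L ≤ m) (x : Fin 𝔡 → ℝ) (a : ℕ)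
    (u : Fin m → ℝ) :
    initMeasure 𝔡 m d L {y | hseq y.1 y.2.1 x L ≠ 0 ∧
        Real.exp 17 / 2 * √(Λ / d) * l2 u < l2 (mulVec (backMat y.2.2 y.1 y.2.1 x a) u)}
      ≤ ENNReal.ofReal (Real.exp (-(6 * Λ))) := by
  have hL' : (1 : ℝ) ≤ L := by exact_mod_cast hL
  have hΛm' : Real.exp 17 * Λ ≤ m := (le_mul_of_one_le_right (by positivity) hL').trans hΛm
  have hm : (0 : ℝ) < m := lt_of_lt_of_le (by positivity) hΛm'
  set r := Real.exp 17 * Λ / 16 with hr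
  have hr0 : 0 < r := by positivity
  refine (initMeasure_setOf_lt_l2_backMat_le hd hr0 (by linarith) x a u
    (by positivity)).trans (ENNReal.ofReal_le_ofReal ?_)
  have hratio : (4 * r / (d * (Real.exp 17 / 2 * √(Λ / d)) ^ 2)) ^ r = Real.exp (-17 * r) := by
    rw [Real.exp_mul, Real.exp_neg, mul_pow, Real.sq_sqrt (by positivity), hr]
    congr 1
    field_simp
    norm_num
  have hlayers : 8 * r ^ 2 * L / m - r ≤ 0 := by
    rw [sub_nonpos, div_le_iff₀ hm]
    calc 8 * r ^ 2 * L = r * (Real.exp 17 * Λ * L / 2) := by rw [hr]; ring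
      _ ≤ r * m := by gcongr; linarith
  have hout : (2 : ℝ) ^ d ≤ Real.exp (16 * r) :=
    calc (2 : ℝ) ^ d ≤ Real.exp 1 ^ d := by
          gcongr
          linarith [Real.add_one_le_exp 1]
      _ = Real.exp d := by rw [← Real.exp_nat_mul, mul_one]
      _ ≤ Real.exp (16 * r) := by gcongr; linarith
  rw [hratio]
  calc Real.exp (-17 * r) * Real.exp (8 * r ^ 2 * L / m - r) * 2 ^ d
      ≤ Real.exp (-17 * r) * Real.exp 0 * Real.exp (16 * r) := by gcongr
    _ = Real.exp (-r) := by
        rw [← Real.exp_add, ← Real.exp_add]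
        ring_nf
    _ ≤ Real.exp (-(6 * Λ)) := by
        gcongr
        rw [hr]
        nlinarith [ninetySix_le_exp_seventeen]

lemma two_pow_mul_half_pow_le_exp (hΛ : 0 ≤ Λ) (h : (L + 1 : ℝ) + 12 * Λ ≤ m) :
    (2 : ENNReal) ^ (L + 1) * (1 / 2) ^ m ≤ ENNReal.ofReal (Real.exp (-(6 * Λ))) := by
  have htwo : ∀ k : ℕ, (2 : ℝ) ^ k = Real.exp (k * Real.log 2) := fun k => by
    rw [Real.exp_nat_mul, Real.exp_log two_pos]
  have hreal : (2 : ENNReal) ^ (L + 1) * (1 / 2) ^ m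
      = ENNReal.ofReal ((2 : ℝ) ^ (L + 1) / 2 ^ m) := by
    rw [ENNReal.ofReal_div_of_pos (by positivity), ENNReal.ofReal_pow zero_le_two,
      ENNReal.ofReal_pow zero_le_two, ENNReal.ofReal_ofNat, one_div, ← ENNReal.inv_pow,
      div_eq_mul_inv]
  rw [hreal, htwo, htwo, ← Real.exp_sub]
  gcongr
  have hlog : 1 / 2 ≤ Real.log 2 := by linarith [Real.log_two_gt_d9]
  calc (L + 1 : ℕ) * Real.log 2 - m * Real.log 2 = -((m - (L + 1 : ℝ)) * Real.log 2) := by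
        push_cast
        ring
    _ ≤ -(12 * Λ * (1 / 2)) :=
        neg_le_neg (mul_le_mul (by linarith) hlog (by norm_num) (by linarith))
    _ = -(6 * Λ) := by ring

lemma ofReal_one_sub_le_of_compl_le {Ω : Type*} [MeasurableSpace Ω] {μ : Measure Ω}
    [IsProbabilityMeasure μ] {S : Set Ω} {p : ℝ} (hp : 0 ≤ p) (h : μ Sᶜ ≤ ENNReal.ofReal p) :
    ENNReal.ofReal (1 - p) ≤ μ S := by
  rw [ENNReal.ofReal_sub _ hp, ENNReal.ofReal_one, tsub_le_iff_right]
  calc 1 = μ (S ∪ Sᶜ) := by rw [Set.union_compl_self, measure_univ]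
    _ ≤ μ S + μ Sᶜ := measure_union_le _ _
    _ ≤ μ S + ENNReal.ofReal p := by gcongr

lemma ofReal_one_sub_exp_le_initMeasure_sparseBackEvent (hd : 0 < d) (hL : 0 < L) (hs : 1 ≤ s)
    (hsm : s ≤ m) (hnm : n ≤ m) {x : Fin n → Fin 𝔡 → ℝ} (hx : ∀ i, x i ≠ 0)
    (hΛ : 1 / 2 ≤ s * Real.log m) (hdΛ : d ≤ Real.exp 17 * (s * Real.log m))
    (hΛm : Real.exp 17 * (s * Real.log m) * L ≤ m) :
    ENNReal.ofReal (1 - Real.exp (-(s * Real.log m))) ≤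
      initMeasure 𝔡 m d L (sparseBackEvent d L x s (Real.exp 17 * √(s * Real.log m / d))) := by
  set Λ := s * Real.log m with hΛdef
  have hL' : (1 : ℝ) ≤ L := by exact_mod_cast hL
  have hm96 : 96 * (Λ * L) ≤ m :=
    (mul_le_mul_of_nonneg_right ninetySix_le_exp_seventeen (by positivity)).trans (by linarith)
  have hm0 : (0 : ℝ) < m := by nlinarith
  have hdead : ∀ i, initMeasure 𝔡 m d L {y | hseq y.1 y.2.1 (x i) L = 0}
      ≤ ENNReal.ofReal (Real.exp (-(6 * Λ))) := fun i =>
    (initMeasure_setOf_hseq_eq_zero_le (by exact_mod_cast hm0) (hx i)).trans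
      (two_pow_mul_half_pow_le_exp (by linarith) (by nlinarith))
  have hLm : L + 3 ≤ m := by
    have : (L + 3 : ℝ) ≤ m := by nlinarith
    exact_mod_cast this
  have hpow : (m : ℝ) ^ (5 * s) = Real.exp (5 * Λ) := by
    rw [← Real.exp_log (pow_pos hm0 _), Real.log_pow, hΛdef]
    push_cast
    ring_nf
  rw [show Real.exp 17 * √(Λ / d) = 2 * (Real.exp 17 / 2 * √(Λ / d)) by ring]
  refine ofReal_one_sub_le_of_compl_le (Real.exp_pos _).le ?_
  calc initMeasure 𝔡 m d L (sparseBackEvent d L x s (2 * (Real.exp 17 / 2 * √(Λ / d))))ᶜ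
      ≤ (n * (1 + (L + 2) * (m * (2 * m + 1)) ^ s) : ℕ)
          * ENNReal.ofReal (Real.exp (-(6 * Λ))) :=
        initMeasure_compl_sparseBackEvent_le hs hsm hdead fun i =>
          initMeasure_setOf_lt_l2_backMat_le_exp hd hL (by linarith) hdΛ hΛm (x i)
    _ ≤ (m ^ (5 * s) : ℕ) * ENNReal.ofReal (Real.exp (-(6 * Λ))) := by
        gcongr
        exact union_count_le hs hnm hLm
    _ = ENNReal.ofReal (Real.exp (-Λ)) := by
        rw [← ENNReal.ofReal_natCast, Nat.cast_pow, hpow, ← ENNReal.ofReal_mul (by positivity),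
          ← Real.exp_add]
        ring_nf

end UnionBound

theorem statement8_general :
    ∃ C c : ℝ, 1 ≤ C ∧ 0 < c ∧
      ∀ (𝔡 m d L n : ℕ), 0 < L → 1 < m → 0 < d → n ≤ m →
        ∀ x : Fin n → Fin 𝔡 → ℝ, (∀ i, x i ≠ 0) →
        ∀ s : ℕ, (d : ℝ) / (C * Real.log m) ≤ (s : ℝ) →
          (s : ℝ) ≤ (m : ℝ) / (C * (L : ℝ) * Real.log m) →
        ENNReal.ofReal (1 - Real.exp (-(c * (s : ℝ) * Real.log m))) ≤
          initMeasure 𝔡 m d L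
            {z | ∀ (i : Fin n) (a : ℕ), 1 ≤ a → a ≤ L + 1 →
              ∀ (v : Fin d → ℝ) (u : Fin m → ℝ), l0 u ≤ s →
                |dot v (mulVec (backMat z.2.2 z.1 z.2.1 (x i) a) u)| ≤
                  C * Real.sqrt ((s : ℝ) * Real.log m / (d : ℝ)) * l2 v * l2 u} := by
  have hC := ninetySix_le_exp_seventeen
  refine ⟨Real.exp 17, 1, by linarith, one_pos, ?_⟩
  intro 𝔡 m d L n hL hm hd hnm x hx s hds hsm
  have hL' : (1 : ℝ) ≤ L := by exact_mod_cast hL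
  have hlog : 1 / 2 ≤ Real.log m := by
    have := Real.log_le_log two_pos (by exact_mod_cast hm : (2 : ℝ) ≤ m)
    linarith [Real.log_two_gt_d9]
  have hs : (1 : ℝ) ≤ s := by
    have : (0 : ℝ) < s := lt_of_lt_of_le (by positivity) hds
    exact_mod_cast this
  rw [div_le_iff₀ (by positivity)] at hds
  rw [le_div_iff₀ (by positivity)] at hsm
  have hsm' : (s : ℝ) ≤ m := by
    refine (le_mul_of_one_le_right (by positivity) ?_).trans hsm
    nlinarith [mul_le_mul hC hL' zero_le_one (by positivity)]
  rw [one_mul]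
  exact ofReal_one_sub_exp_le_initMeasure_sparseBackEvent hd hL (by exact_mod_cast hs)
    (by exact_mod_cast hsm') hnm hx (by nlinarith) (by linarith) (by linarith)

lemma lt_of_overparametrized {C : ℝ} {n : ℕ} (hC : 1 ≤ C) (hL : 2 ≤ L) (hn : 0 < n)
    (h : C * n * L * Real.log (n * L) ≤ m) : n < m := by
  have hn' : (1 : ℝ) ≤ n := by exact_mod_cast hn
  have hL' : (2 : ℝ) ≤ L := by exact_mod_cast hL
  have hlog : 1 / 2 < Real.log (n * L) := by
    have := Real.log_le_log two_pos (by nlinarith : (2 : ℝ) ≤ n * L)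
    linarith [Real.log_two_gt_d9]
  have : (n : ℝ) < m :=
    calc (n : ℝ) = 1 * n * 2 * (1 / 2) := by ring
      _ < 1 * n * 2 * Real.log (n * L) := by gcongr
      _ ≤ C * n * L * Real.log (n * L) := by gcongr
      _ ≤ m := h
  exact_mod_cast this

/-- Lemma 7.3 a, backward propagation bound, sparse version. -/
theorem statement8 :
    ∃ C c : ℝ, 0 < C ∧ 0 < c ∧
      ∀ (𝔡 m d L n : ℕ) (h𝔡 : 0 < 𝔡) (hL : 2 ≤ L) (hm : 0 < m) (hd : 0 < d) (hn : 0 < n)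
        (x : Fin n → Fin 𝔡 → ℝ), (∀ i, l2 (x i) = 1) →
        C * (n : ℝ) * (L : ℝ) * Real.log ((n : ℝ) * (L : ℝ)) ≤ (m : ℝ) →
        ∀ s : ℕ, (d : ℝ) / (C * Real.log m) ≤ (s : ℝ) →
          (s : ℝ) ≤ (m : ℝ) / (C * (L : ℝ) * Real.log m) →
        ENNReal.ofReal (1 - Real.exp (-(c * (s : ℝ) * Real.log m))) ≤
          initMeasure 𝔡 m d L
            {z | ∀ (i : Fin n) (a : ℕ), 1 ≤ a → a ≤ L + 1 →
              ∀ (v : Fin d → ℝ) (u : Fin m → ℝ), l0 u ≤ s →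
                |dot v (mulVec (backMat z.2.2 z.1 z.2.1 (x i) a) u)| ≤
                  C * Real.sqrt ((s : ℝ) * Real.log m / (d : ℝ)) * l2 v * l2 u} := by
  obtain ⟨C, c, hC, hc, hgen⟩ := statement8_general
  refine ⟨C, c, one_pos.trans_le hC, hc, fun 𝔡 m d L n _ hL _ hd hn x hx hover => ?_⟩
  have hnm := lt_of_overparametrized hC hL hn hover
  refine hgen 𝔡 m d L n (by omega) (by omega) hd hnm.le x fun i hzero => ?_
  simpa [hzero, l2] using hx i

end DNNPaper
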